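/- Let μ = N(m₁, s²I_d) and ν = N(m₂, r²I_d) be Gaussian measures on ℝ^d with isotropic covariances, s, r ≥ 0. Then SW_2²(μ, ν) = W_2²(μ, ν)/d; explicitly, W_2²(μ,ν) = ‖m₁ − m₂‖² + d(s − r)² and SW_2²(μ,ν) = ‖m₁ − m₂‖²/d + (s − r)². -/

import Mathlib

/-!
Two measures that are images of one law `P` under `z ↦ m + s • z`, with `s ≥ 0`, are coupled
optimally by feeding both maps the same `z`. Indeed, the cost of any coupling splits into the
squared distance of the means plus the squared `L²` distance of the centred variables, and the
latter is at least the squared difference of the standard deviations by the reverse triangle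
inequality; the shared coupling attains this. Projections keep the location-scale form, so by
Tonelli `SW₂²` is the same cost with `‖x‖²` replaced by the mean of `⟪x, θ⟫²` over the sphere,
which is `‖x‖² / d` by rotation invariance.
-/

open MeasureTheory ENNReal Metric Filter
open scoped RealInnerProductSpace NNReal

noncomputable section

/-- `ℝ^d` as a Euclidean space. -/
abbrev Ed (d : ℕ) : Type := EuclideanSpace ℝ (Fin d)

/-- `π` is a coupling of `μ` and `ν`. -/
def IsCoupling {E : Type*} [MeasurableSpace E] (π : Measure (E × E)) (μ ν : Measure E) : Prop :=
  π.map Prod.fst = μ ∧ π.map Prod.snd = ν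

/-- Squared 2-Wasserstein distance. -/
def W2sq {E : Type*} [MeasurableSpace E] [NormedAddCommGroup E] (μ ν : Measure E) : ℝ≥0∞ :=
  ⨅ (π : Measure (E × E)) (_ : IsCoupling π μ ν), ∫⁻ p, (‖p.1 - p.2‖₊ : ℝ≥0∞) ^ 2 ∂π

/-- The uniform probability measure on the unit sphere `S^{d-1}`. -/
def unifSphere (d : ℕ) : Measure (sphere (0 : Ed d) 1) :=
  ((volume : Measure (Ed d)).toSphere Set.univ)⁻¹ • (volume : Measure (Ed d)).toSphere

/-- Projection `P^θ(x) = ⟨x, θ⟩`. -/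
def proj {d : ℕ} (θ : Ed d) (x : Ed d) : ℝ := ⟪x, θ⟫

/-- Squared Sliced-Wasserstein distance. -/
def SW2sq {d : ℕ} (μ ν : Measure (Ed d)) : ℝ≥0∞ :=
  ∫⁻ θ : sphere (0 : Ed d) 1,
    W2sq (μ.map (proj (θ : Ed d))) (ν.map (proj (θ : Ed d))) ∂(unifSphere d)

/-- Sliced-Wasserstein distance. -/
def SW2 {d : ℕ} (μ ν : Measure (Ed d)) : ℝ := Real.sqrt (SW2sq μ ν).toReal

/-- Finite second moment. -/
def FiniteSecondMoment {d : ℕ} (μ : Measure (Ed d)) : Prop :=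
  ∫⁻ x, (‖x‖₊ : ℝ≥0∞) ^ 2 ∂μ < ∞

/-- `μ ∈ P_2(K)`: probability measure supported in `K` with finite second moment. -/
def MemP2 {d : ℕ} (K : Set (Ed d)) (μ : Measure (Ed d)) : Prop :=
  IsProbabilityMeasure μ ∧ μ Kᶜ = 0 ∧ FiniteSecondMoment μ

open ProbabilityTheory in
/-- The isotropic Gaussian measure N(m, s²I_d) on ℝ^d. -/
def isoGaussian (d : ℕ) (m : Ed d) (s : ℝ≥0) : Measure (Ed d) :=
  (Measure.pi fun i : Fin d => gaussianReal (m i) (s ^ 2)).map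
    (MeasurableEquiv.toLp 2 (Fin d → ℝ))

open ProbabilityTheory Module
open scoped Pointwise

section LpTwo

variable {Ω E : Type*} [MeasurableSpace Ω] {P : Measure Ω} [NormedAddCommGroup E]

lemma lintegral_nnnorm_sq_eq_ofReal_lpNorm_sq {X : Ω → E} (hX : MemLp X 2 P) :
    ∫⁻ ω, (‖X ω‖₊ : ℝ≥0∞) ^ 2 ∂P = ENNReal.ofReal (lpNorm X 2 P ^ 2) := by
  have h := eLpNorm_nnreal_pow_eq_lintegral (f := X) (μ := P) (p := 2) two_ne_zero
  simp only [NNReal.coe_ofNat, ENNReal.rpow_ofNat, ENNReal.coe_ofNat, enorm_eq_nnnorm] at h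
  rw [← h, ENNReal.ofReal_pow lpNorm_nonneg, ofReal_lpNorm hX]

lemma lpNorm_two_sq_eq_integral {X : Ω → E} (hX : MemLp X 2 P) :
    lpNorm X 2 P ^ 2 = ∫ ω, ‖X ω‖ ^ 2 ∂P := by
  rw [lpNorm_eq_integral_norm_rpow_toReal two_ne_zero ofNat_ne_top hX.aestronglyMeasurable,
    ENNReal.toReal_ofNat, ← Real.rpow_natCast, Nat.cast_ofNat,
    Real.rpow_inv_rpow (by positivity) two_ne_zero]
  simp only [Real.rpow_ofNat]

lemma abs_lpNorm_sub_lpNorm_le {p : ℝ≥0∞} {X Y : Ω → E} (hX : MemLp X p P) (hY : MemLp Y p P)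
    (hp : 1 ≤ p) : |lpNorm X p P - lpNorm Y p P| ≤ lpNorm (X - Y) p P :=
  abs_sub_le_iff.2 ⟨sub_le_iff_le_add'.2 (lpNorm_le_lpNorm_add_lpNorm_sub' hY hp),
    sub_le_iff_le_add'.2 (lpNorm_le_lpNorm_add_lpNorm_sub hX hp)⟩

lemma lpNorm_comp_measurePreserving {Ω' : Type*} [MeasurableSpace Ω'] {Q : Measure Ω'}
    {p : ℝ≥0∞} {f : Ω → Ω'} {g : Ω' → E} (hg : AEStronglyMeasurable g Q)
    (hf : MeasurePreserving f P Q) : lpNorm (g ∘ f) p P = lpNorm g p Q := by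
  rw [← toReal_eLpNorm hg, ← toReal_eLpNorm (hg.comp_measurePreserving hf),
    eLpNorm_comp_measurePreserving hg hf]

lemma lpNorm_two_sq_eq_norm_integral_sq_add [InnerProductSpace ℝ E] [CompleteSpace E]
    [IsProbabilityMeasure P] {X : Ω → E} (hX : MemLp X 2 P) :
    lpNorm X 2 P ^ 2
      = ‖∫ ω, X ω ∂P‖ ^ 2 + lpNorm (fun ω ↦ X ω - ∫ ω', X ω' ∂P) 2 P ^ 2 := by
  set m := ∫ ω, X ω ∂P
  have hXi : Integrable X P := hX.integrable one_le_two
  have hsq : Integrable (fun ω ↦ ‖X ω‖ ^ 2) P := hX.integrable_norm_pow two_ne_zero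
  have hinner : Integrable (fun ω ↦ 2 * ⟪m, X ω⟫) P := (hXi.const_inner m).const_mul 2
  have hcross : Integrable (fun ω ↦ ‖X ω‖ ^ 2 - 2 * ⟪m, X ω⟫) P := hsq.sub hinner
  have hexpand (ω : Ω) : ‖X ω - m‖ ^ 2 = ‖X ω‖ ^ 2 - 2 * ⟪m, X ω⟫ + ‖m‖ ^ 2 := by
    rw [norm_sub_sq_real, real_inner_comm]
  have hmean : ∫ ω, ⟪m, X ω⟫ ∂P = ‖m‖ ^ 2 := by
    rw [integral_inner hXi, real_inner_self_eq_norm_sq]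
  have hcentred : lpNorm (fun ω ↦ X ω - m) 2 P ^ 2 = ∫ ω, ‖X ω - m‖ ^ 2 ∂P :=
    lpNorm_two_sq_eq_integral (hX.sub (memLp_const m))
  rw [lpNorm_two_sq_eq_integral hX, hcentred, integral_congr_ae (ae_of_all _ hexpand),
    integral_add hcross (integrable_const _), integral_sub hsq hinner,
    integral_const_mul, hmean, integral_const, probReal_univ, one_smul]
  ring

end LpTwo

section Wasserstein

variable {E : Type*} [NormedAddCommGroup E] [MeasurableSpace E]

/-- The total standard deviation `(∫ ‖x - m‖² dμ(x))^{1/2}` of `μ` about its mean `m`, that is, the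
square root of the trace of the covariance. -/
def totalStdDev [NormedSpace ℝ E] (μ : Measure E) : ℝ := lpNorm (fun x ↦ x - ∫ y, y ∂μ) 2 μ

lemma W2sq_map_map_le [BorelSpace E] [SecondCountableTopology E] {Ω : Type*} [MeasurableSpace Ω]
    (P : Measure Ω) {X Y : Ω → E} (hX : Measurable X) (hY : Measurable Y) :
    W2sq (P.map X) (P.map Y) ≤ ∫⁻ ω, (‖X ω - Y ω‖₊ : ℝ≥0∞) ^ 2 ∂P := by
  have hcoupling : IsCoupling (P.map fun ω ↦ (X ω, Y ω)) (P.map X) (P.map Y) :=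
    ⟨Measure.map_map measurable_fst (hX.prodMk hY), Measure.map_map measurable_snd (hX.prodMk hY)⟩
  calc W2sq (P.map X) (P.map Y)
      ≤ ∫⁻ p, (‖p.1 - p.2‖₊ : ℝ≥0∞) ^ 2 ∂(P.map fun ω ↦ (X ω, Y ω)) :=
        iInf₂_le (P.map fun ω ↦ (X ω, Y ω)) hcoupling
    _ = ∫⁻ ω, (‖X ω - Y ω‖₊ : ℝ≥0∞) ^ 2 ∂P := lintegral_map (by fun_prop) (hX.prodMk hY)

variable [InnerProductSpace ℝ E] [CompleteSpace E] [BorelSpace E] [SecondCountableTopology E]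

lemma ofReal_norm_integral_sub_sq_add_le_W2sq {μ ν : Measure E} [IsProbabilityMeasure μ]
    (hμ : MemLp id 2 μ) (hν : MemLp id 2 ν) :
    ENNReal.ofReal (‖∫ x, x ∂μ - ∫ y, y ∂ν‖ ^ 2 + (totalStdDev μ - totalStdDev ν) ^ 2)
      ≤ W2sq μ ν := by
  refine le_iInf₂ fun π hπ ↦ ?_
  have hfst : MeasurePreserving Prod.fst π μ := ⟨measurable_fst, hπ.1⟩
  have hsnd : MeasurePreserving Prod.snd π ν := ⟨measurable_snd, hπ.2⟩
  have : IsProbabilityMeasure π := by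
    have : IsProbabilityMeasure (π.map Prod.fst) := hπ.1 ▸ ‹IsProbabilityMeasure μ›
    exact Measure.isProbabilityMeasure_of_map Prod.fst
  have hX : MemLp (Prod.fst : E × E → E) 2 π := hμ.comp_measurePreserving hfst
  have hY : MemLp (Prod.snd : E × E → E) 2 π := hν.comp_measurePreserving hsnd
  have hmean : ∫ p, (p.1 - p.2) ∂π = ∫ x, x ∂μ - ∫ y, y ∂ν := by
    rw [integral_sub (hX.integrable one_le_two) (hY.integrable one_le_two), ← hπ.1, ← hπ.2,
      integral_map (by fun_prop) (by fun_prop), integral_map (by fun_prop) (by fun_prop)]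
  have hdev : |totalStdDev μ - totalStdDev ν|
      ≤ lpNorm (fun p ↦ p.1 - p.2 - ∫ q, (q.1 - q.2) ∂π) 2 π := by
    rw [totalStdDev, totalStdDev, ← lpNorm_comp_measurePreserving (by fun_prop) hfst,
      ← lpNorm_comp_measurePreserving (by fun_prop) hsnd]
    refine (abs_lpNorm_sub_lpNorm_le (hX.sub (memLp_const _)) (hY.sub (memLp_const _))
      one_le_two).trans_eq (congrArg (lpNorm · 2 π) ?_)
    ext p
    simp only [hmean, Pi.sub_apply]
    abel
  have hcost : MemLp (fun p : E × E ↦ p.1 - p.2) 2 π := hX.sub hY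
  calc ENNReal.ofReal (‖∫ x, x ∂μ - ∫ y, y ∂ν‖ ^ 2 + (totalStdDev μ - totalStdDev ν) ^ 2)
      ≤ ENNReal.ofReal (‖∫ p, (p.1 - p.2) ∂π‖ ^ 2
          + lpNorm (fun p ↦ p.1 - p.2 - ∫ q, (q.1 - q.2) ∂π) 2 π ^ 2) := by
        rw [hmean] at hdev ⊢
        grw [← sq_abs (totalStdDev μ - _), hdev]
    _ = ENNReal.ofReal (lpNorm (fun p : E × E ↦ p.1 - p.2) 2 π ^ 2) := by
        rw [lpNorm_two_sq_eq_norm_integral_sq_add hcost]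
    _ = ∫⁻ p, (‖p.1 - p.2‖₊ : ℝ≥0∞) ^ 2 ∂π :=
        (lintegral_nnnorm_sq_eq_ofReal_lpNorm_sq hcost).symm

end Wasserstein

section LocScale

variable {E : Type*} [NormedAddCommGroup E] [NormedSpace ℝ E] [MeasurableSpace E] [BorelSpace E]

/-- The law of `m + s • Z` for `Z` of law `P`: the member of the location-scale family of `P` with
location `m` and scale `s`. -/
def locScale (P : Measure E) (m : E) (s : ℝ) : Measure E := P.map fun z ↦ m + s • z

lemma map_locScale {F : Type*} [NormedAddCommGroup F] [NormedSpace ℝ F] [MeasurableSpace F]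
    [BorelSpace F] (L : E →L[ℝ] F) (P : Measure E) (m : E) (s : ℝ) :
    (locScale P m s).map L = locScale (P.map L) (L m) s := by
  rw [locScale, locScale, Measure.map_map (by fun_prop) (by fun_prop),
    Measure.map_map (by fun_prop) (by fun_prop)]
  congr 1
  ext z
  simp

variable {P : Measure E} [IsProbabilityMeasure P]

instance isProbabilityMeasure_locScale (m : E) (s : ℝ) : IsProbabilityMeasure (locScale P m s) :=
  Measure.isProbabilityMeasure_map (by fun_prop)

variable [SecondCountableTopology E] (hP : MemLp id 2 P)
include hP

lemma memLp_id_locScale (m : E) (s : ℝ) : MemLp id 2 (locScale P m s) :=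
  (memLp_map_measure_iff (by fun_prop) (by fun_prop)).2 ((memLp_const m).add (hP.const_smul s))

variable [CompleteSpace E]

lemma integral_id_locScale (m : E) (s : ℝ) :
    ∫ x, x ∂(locScale P m s) = m + s • ∫ z, z ∂P := by
  have hsmul : Integrable (fun z ↦ s • z) P := (hP.integrable one_le_two).smul s
  rw [locScale, integral_map (by fun_prop) (by fun_prop),
    integral_add (integrable_const m) hsmul, integral_const, integral_smul, probReal_univ, one_smul]

lemma totalStdDev_locScale (m : E) (s : ℝ) :
    totalStdDev (locScale P m s) = |s| * totalStdDev P := by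
  have hpres : MeasurePreserving (fun z ↦ m + s • z) P (locScale P m s) := ⟨by fun_prop, rfl⟩
  rw [totalStdDev, ← lpNorm_comp_measurePreserving (by fun_prop) hpres, integral_id_locScale hP,
    totalStdDev, ← Real.norm_eq_abs, ← coe_nnnorm, ← lpNorm_const_smul]
  congr 1
  ext z
  simp [smul_sub]

end LocScale

section LocScaleWasserstein

variable {E : Type*} [NormedAddCommGroup E] [InnerProductSpace ℝ E] [CompleteSpace E]
  [MeasurableSpace E] [BorelSpace E] [SecondCountableTopology E]
  {P : Measure E} [IsProbabilityMeasure P] (hP : MemLp id 2 P)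
include hP

lemma lintegral_nnnorm_locScale_sub_sq (m₁ m₂ : E) (s r : ℝ) :
    ∫⁻ z, (‖(m₁ + s • z) - (m₂ + r • z)‖₊ : ℝ≥0∞) ^ 2 ∂P
      = ENNReal.ofReal (‖(m₁ - m₂) + (s - r) • ∫ z, z ∂P‖ ^ 2
          + (s - r) ^ 2 * totalStdDev P ^ 2) := by
  have hdiff (z : E) : (m₁ + s • z) - (m₂ + r • z) = (m₁ - m₂) + (s - r) • z := by module
  have hid : MemLp (fun x ↦ x) 2 (locScale P (m₁ - m₂) (s - r)) := memLp_id_locScale hP _ _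
  calc ∫⁻ z, (‖(m₁ + s • z) - (m₂ + r • z)‖₊ : ℝ≥0∞) ^ 2 ∂P
      = ∫⁻ x, (‖x‖₊ : ℝ≥0∞) ^ 2 ∂(locScale P (m₁ - m₂) (s - r)) := by
        simp_rw [hdiff]
        rw [locScale, lintegral_map (by fun_prop) (by fun_prop)]
    _ = ENNReal.ofReal (‖∫ x, x ∂(locScale P (m₁ - m₂) (s - r))‖ ^ 2
          + totalStdDev (locScale P (m₁ - m₂) (s - r)) ^ 2) := by
        rw [lintegral_nnnorm_sq_eq_ofReal_lpNorm_sq hid, lpNorm_two_sq_eq_norm_integral_sq_add hid,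
          totalStdDev]
    _ = _ := by rw [totalStdDev_locScale hP, integral_id_locScale hP, mul_pow, sq_abs]

theorem W2sq_locScale_eq_ofReal (m₁ m₂ : E) (s r : ℝ≥0) :
    W2sq (locScale P m₁ s) (locScale P m₂ r)
      = ENNReal.ofReal (‖(m₁ - m₂) + ((s : ℝ) - r) • ∫ z, z ∂P‖ ^ 2
          + ((s : ℝ) - r) ^ 2 * totalStdDev P ^ 2) := by
  refine le_antisymm ?_ ?_
  · rw [← lintegral_nnnorm_locScale_sub_sq hP]
    exact W2sq_map_map_le P (by fun_prop) (by fun_prop)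
  · have hmean : (m₁ - m₂) + ((s : ℝ) - r) • ∫ z, z ∂P
        = ∫ x, x ∂(locScale P m₁ s) - ∫ x, x ∂(locScale P m₂ r) := by
      rw [integral_id_locScale hP, integral_id_locScale hP]
      module
    have hdev : ((s : ℝ) - r) ^ 2 * totalStdDev P ^ 2
        = (totalStdDev (locScale P m₁ s) - totalStdDev (locScale P m₂ r)) ^ 2 := by
      rw [totalStdDev_locScale hP, totalStdDev_locScale hP, abs_of_nonneg s.coe_nonneg,
        abs_of_nonneg r.coe_nonneg]
      ring
    rw [hmean, hdev]
    exact ofReal_norm_integral_sub_sq_add_le_W2sq (memLp_id_locScale hP m₁ s)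
      (memLp_id_locScale hP m₂ r)

theorem W2sq_locScale_eq_lintegral (m₁ m₂ : E) (s r : ℝ≥0) :
    W2sq (locScale P m₁ s) (locScale P m₂ r)
      = ∫⁻ z, (‖(m₁ + (s : ℝ) • z) - (m₂ + (r : ℝ) • z)‖₊ : ℝ≥0∞) ^ 2 ∂P := by
  rw [W2sq_locScale_eq_ofReal hP, lintegral_nnnorm_locScale_sub_sq hP]

end LocScaleWasserstein

section Sphere

/-- The action of a linear isometry on the unit sphere. -/
def sphereMap {E : Type*} [NormedAddCommGroup E] [NormedSpace ℝ E] (R : E ≃ₗᵢ[ℝ] E)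
    (θ : sphere (0 : E) 1) : sphere (0 : E) 1 :=
  ⟨R θ, by simp⟩

lemma measurePreserving_sphereMap {E : Type*} [NormedAddCommGroup E] [NormedSpace ℝ E]
    [MeasurableSpace E] [BorelSpace E] {μ : Measure E} (R : E ≃ₗᵢ[ℝ] E)
    (hR : MeasurePreserving R μ μ) :
    MeasurePreserving (sphereMap R) μ.toSphere μ.toSphere := by
  have hmeas : Measurable (sphereMap R) :=
    (R.continuous.measurable.comp measurable_subtype_coe).subtype_mk
  refine ⟨hmeas, Measure.ext fun A hA ↦ ?_⟩
  have hcone : Set.Ioo (0 : ℝ) 1 • ((↑) '' (sphereMap R ⁻¹' A) : Set E)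
      = R ⁻¹' (Set.Ioo (0 : ℝ) 1 • ((↑) '' A)) := by
    ext x
    simp only [Set.mem_smul, Set.mem_preimage, Set.mem_image]
    constructor
    · rintro ⟨t, ht, _, ⟨θ, hθ, rfl⟩, rfl⟩
      exact ⟨t, ht, _, ⟨sphereMap R θ, hθ, rfl⟩, (map_smul R t (θ : E)).symm⟩
    · rintro ⟨t, ht, _, ⟨θ, hθ, rfl⟩, hx⟩
      refine ⟨t, ht, _, ⟨sphereMap R.symm θ, ?_, rfl⟩, R.injective ?_⟩
      · simpa [sphereMap] using hθ
      · simpa [sphereMap] using hx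
  rw [Measure.map_apply hmeas hA, Measure.toSphere_apply' _ (hmeas hA),
    Measure.toSphere_apply' _ hA, hcone, hR.measure_preimage_emb R.toHomeomorph.measurableEmbedding]

variable {d : ℕ}

instance isProbabilityMeasure_unifSphere [NeZero d] : IsProbabilityMeasure (unifSphere d) :=
  ⟨by
    rw [unifSphere, Measure.smul_apply, smul_eq_mul]
    exact ENNReal.inv_mul_cancel
      (Measure.measure_univ_ne_zero.2 (Measure.toSphere_ne_zero _)) (measure_ne_top _ _)⟩

lemma measurePreserving_sphereMap_unifSphere (R : Ed d ≃ₗᵢ[ℝ] Ed d) :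
    MeasurePreserving (sphereMap R) (unifSphere d) (unifSphere d) :=
  (measurePreserving_sphereMap R R.measurePreserving).smul_measure _

lemma proj_eq_innerSL (θ : Ed d) : proj θ = innerSL ℝ θ := by
  ext x
  exact real_inner_comm θ x

lemma lintegral_proj_unifSphere_congr_norm {v w : Ed d} (h : ‖v‖ = ‖w‖) {f : ℝ → ℝ≥0∞}
    (hf : Measurable f) :
    ∫⁻ θ, f (proj θ v) ∂unifSphere d = ∫⁻ θ, f (proj θ w) ∂unifSphere d := by
  let R := (ℝ ∙ (v - w))ᗮ.reflection
  have hRv : R v = w := Submodule.reflection_sub h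
  have hmeas : Measurable fun θ : sphere (0 : Ed d) 1 ↦ f (proj θ w) := by
    unfold proj
    fun_prop
  rw [← (measurePreserving_sphereMap_unifSphere R).lintegral_comp hmeas]
  congr! 3 with θ
  rw [← hRv]
  exact (R.inner_map_map v θ).symm

lemma sum_nnnorm_proj_single_sq (θ : sphere (0 : Ed d) 1) (a : ℝ) :
    ∑ i, (‖proj (θ : Ed d) (EuclideanSpace.single i a)‖₊ : ℝ≥0∞) ^ 2 = (‖a‖₊ : ℝ≥0∞) ^ 2 := by
  have h : ∑ i, ‖(θ : Ed d) i‖₊ ^ 2 = 1 := by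
    ext
    push_cast
    rw [← EuclideanSpace.norm_sq_eq, norm_eq_of_mem_sphere, one_pow]
  simp only [proj, EuclideanSpace.inner_single_left]
  norm_cast
  simp [mul_pow, ← Finset.mul_sum, h]

lemma lintegral_nnnorm_proj_sq_unifSphere [NeZero d] (v : Ed d) :
    ∫⁻ θ, (‖proj θ v‖₊ : ℝ≥0∞) ^ 2 ∂unifSphere d = (‖v‖₊ : ℝ≥0∞) ^ 2 / d := by
  rw [ENNReal.eq_div_iff (Nat.cast_ne_zero.2 (NeZero.ne d)) (natCast_ne_top d)]
  calc (d : ℝ≥0∞) * ∫⁻ θ, (‖proj θ v‖₊ : ℝ≥0∞) ^ 2 ∂unifSphere d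
      = ∑ _i : Fin d, ∫⁻ θ, (‖proj θ v‖₊ : ℝ≥0∞) ^ 2 ∂unifSphere d := by simp
    _ = ∑ i, ∫⁻ θ, (‖proj θ (EuclideanSpace.single i ‖v‖)‖₊ : ℝ≥0∞) ^ 2 ∂unifSphere d :=
        Finset.sum_congr rfl fun i _ ↦ lintegral_proj_unifSphere_congr_norm
          (f := fun t ↦ (‖t‖₊ : ℝ≥0∞) ^ 2) (by simp) (by fun_prop)
    _ = ∫⁻ _, (‖v‖₊ : ℝ≥0∞) ^ 2 ∂unifSphere d := by
        rw [← lintegral_finsetSum _ fun i _ ↦ by unfold proj; fun_prop]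
        simp_rw [sum_nnnorm_proj_single_sq, nnnorm_norm]
    _ = (‖v‖₊ : ℝ≥0∞) ^ 2 := by simp

lemma lintegral_unifSphere_lintegral_nnnorm_proj_sq [NeZero d] {Ω : Type*} [MeasurableSpace Ω]
    (P : Measure Ω) [SFinite P] {X : Ω → Ed d} (hX : Measurable X) :
    ∫⁻ θ, ∫⁻ ω, (‖proj θ (X ω)‖₊ : ℝ≥0∞) ^ 2 ∂P ∂unifSphere d
      = (∫⁻ ω, (‖X ω‖₊ : ℝ≥0∞) ^ 2 ∂P) / d := by
  rw [lintegral_lintegral_swap (by unfold Function.uncurry proj; fun_prop)]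
  simp_rw [lintegral_nnnorm_proj_sq_unifSphere, div_eq_mul_inv]
  rw [lintegral_mul_const _ (by fun_prop)]

end Sphere

section Sliced

variable {d : ℕ} {P : Measure (Ed d)} [IsProbabilityMeasure P] (hP : MemLp id 2 P)
include hP

lemma W2sq_map_proj_locScale (θ m₁ m₂ : Ed d) (s r : ℝ≥0) :
    W2sq ((locScale P m₁ s).map (proj θ)) ((locScale P m₂ r).map (proj θ))
      = ∫⁻ z, (‖proj θ ((m₁ + (s : ℝ) • z) - (m₂ + (r : ℝ) • z))‖₊ : ℝ≥0∞) ^ 2 ∂P := by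
  simp only [proj_eq_innerSL]
  have : IsProbabilityMeasure (P.map (innerSL ℝ θ)) :=
    Measure.isProbabilityMeasure_map (by fun_prop)
  have hproj : MemLp id 2 (P.map (innerSL ℝ θ)) :=
    (memLp_map_measure_iff (by fun_prop) (by fun_prop)).2 (hP.const_inner θ)
  rw [map_locScale, map_locScale, W2sq_locScale_eq_lintegral hproj,
    lintegral_map (by fun_prop) (by fun_prop)]
  simp only [map_sub, map_add, map_smul]

theorem SW2sq_locScale [NeZero d] (m₁ m₂ : Ed d) (s r : ℝ≥0) :
    SW2sq (locScale P m₁ s) (locScale P m₂ r)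
      = W2sq (locScale P m₁ s) (locScale P m₂ r) / d := by
  simp_rw [SW2sq, W2sq_map_proj_locScale hP]
  rw [lintegral_unifSphere_lintegral_nnnorm_proj_sq P (by fun_prop),
    W2sq_locScale_eq_lintegral hP]

theorem sw2sq_isoGaussian_general (hd : 0 < d) (m₁ m₂ : Ed d) (s r : ℝ≥0) :
    W2sq (locScale P m₁ s) (locScale P m₂ r)
        = ENNReal.ofReal (‖(m₁ - m₂) + ((s : ℝ) - r) • ∫ z, z ∂P‖ ^ 2
            + ((s : ℝ) - r) ^ 2 * totalStdDev P ^ 2) ∧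
    SW2sq (locScale P m₁ s) (locScale P m₂ r)
        = ENNReal.ofReal (‖(m₁ - m₂) + ((s : ℝ) - r) • ∫ z, z ∂P‖ ^ 2 / d
            + ((s : ℝ) - r) ^ 2 * (totalStdDev P ^ 2 / d)) ∧
    SW2sq (locScale P m₁ s) (locScale P m₂ r)
        = W2sq (locScale P m₁ s) (locScale P m₂ r) / d := by
  have : NeZero d := ⟨hd.ne'⟩
  refine ⟨W2sq_locScale_eq_ofReal hP m₁ m₂ s r, ?_, SW2sq_locScale hP m₁ m₂ s r⟩
  rw [SW2sq_locScale hP, W2sq_locScale_eq_ofReal hP, ← ENNReal.ofReal_natCast d,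
    ← ENNReal.ofReal_div_of_pos (Nat.cast_pos.2 hd), add_div, mul_div_assoc]

end Sliced

section Gaussian

lemma gaussianReal_eq_locScale (m : ℝ) (s : ℝ≥0) :
    gaussianReal m (s ^ 2) = locScale (gaussianReal 0 1) m s := by
  have hcomp : (fun z : ℝ ↦ m + (s : ℝ) • z) = (m + ·) ∘ ((s : ℝ) * ·) := rfl
  rw [locScale, hcomp, ← Measure.map_map (by fun_prop) (by fun_prop),
    gaussianReal_map_const_mul, gaussianReal_map_const_add, mul_zero, zero_add, mul_one]
  rfl

lemma isoGaussian_eq_locScale_stdGaussian (d : ℕ) (m : Ed d) (s : ℝ≥0) :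
    isoGaussian d m s = locScale (stdGaussian (Ed d)) m s := by
  simp_rw [isoGaussian, gaussianReal_eq_locScale, locScale]
  rw [← map_pi_eq_stdGaussian, ← Measure.pi_map_pi (by fun_prop),
    Measure.map_map (by fun_prop) (by fun_prop), Measure.map_map (by fun_prop) (by fun_prop)]
  rfl

lemma totalStdDev_stdGaussian_sq (E : Type*) [NormedAddCommGroup E] [InnerProductSpace ℝ E]
    [FiniteDimensional ℝ E] [MeasurableSpace E] [BorelSpace E] :
    totalStdDev (stdGaussian E) ^ 2 = finrank ℝ E := by
  let b := stdOrthonormalBasis ℝ E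
  have hsq (i) : ∫ x, ⟪b i, x⟫ ^ 2 ∂(stdGaussian E) = 1 := by
    have h := variance_dual_stdGaussian (innerSL ℝ (b i))
    rw [variance_of_integral_eq_zero (by fun_prop) (integral_strongDual_stdGaussian _)] at h
    simpa using h
  have hint (i) : Integrable (fun x ↦ ⟪b i, x⟫ ^ 2) (stdGaussian E) :=
    (IsGaussian.memLp_two_id.const_inner (b i)).integrable_sq
  simp only [totalStdDev, integral_id_stdGaussian, sub_zero]
  have hid : MemLp (fun x : E ↦ x) 2 (stdGaussian E) := IsGaussian.memLp_two_id
  rw [lpNorm_two_sq_eq_integral hid]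
  simp_rw [← b.sum_sq_inner_right]
  rw [integral_finsetSum _ fun i _ ↦ hint i]
  simp [hsq]

end Gaussian

/-- For isotropic Gaussians μ = N(m₁, s²I_d) and ν = N(m₂, r²I_d),
W_2²(μ,ν) = ‖m₁ − m₂‖² + d(s − r)², SW_2²(μ,ν) = ‖m₁ − m₂‖²/d + (s − r)², and in particular
SW_2²(μ, ν) = W_2²(μ, ν)/d. -/
theorem sw2sq_isoGaussian (d : ℕ) (hd : 0 < d) (m₁ m₂ : Ed d) (s r : ℝ≥0) :
    W2sq (isoGaussian d m₁ s) (isoGaussian d m₂ r)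
        = ENNReal.ofReal (‖m₁ - m₂‖ ^ 2 + d * ((s : ℝ) - (r : ℝ)) ^ 2) ∧
    SW2sq (isoGaussian d m₁ s) (isoGaussian d m₂ r)
        = ENNReal.ofReal (‖m₁ - m₂‖ ^ 2 / d + ((s : ℝ) - (r : ℝ)) ^ 2) ∧
    SW2sq (isoGaussian d m₁ s) (isoGaussian d m₂ r)
        = W2sq (isoGaussian d m₁ s) (isoGaussian d m₂ r) / d := by
  have hdim : totalStdDev (stdGaussian (Ed d)) ^ 2 = d := by
    rw [totalStdDev_stdGaussian_sq, finrank_euclideanSpace_fin]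
  simpa [isoGaussian_eq_locScale_stdGaussian, hdim, hd.ne', mul_comm] using
    sw2sq_isoGaussian_general (P := stdGaussian (Ed d)) IsGaussian.memLp_two_id hd m₁ m₂ s r
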